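/- The cardinal 𝔭 equals the least cardinal κ such that the product space 2^κ = Bool^I (for an index set I of cardinality κ, with the product topology) is not countable dense homogeneous; that is, 2^κ is CDH for every cardinal κ < 𝔭, and 2^𝔭 is not CDH. -/

import Mathlib

/-- A topological space is countable dense homogeneous (CDH) if for any two countable
dense subsets `D`, `D'` there is a self-homeomorphism taking `D` onto `D'`. -/
def IsCDH (X : Type*) [TopologicalSpace X] : Prop :=
  ∀ D D' : Set X, D.Countable → Dense D → D'.Countable → Dense D' →
    ∃ h : X ≃ₜ X, h '' D = D'

/-- The pseudo-intersection number `𝔭`: the minimal cardinality of a centered family of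
infinite subsets of `ℕ` with no infinite pseudo-intersection. -/
noncomputable def pseudoIntersectionNumber : Cardinal :=
  sInf {c : Cardinal |
    ∃ F : Set (Set ℕ), Cardinal.mk F = c ∧
      (∀ A ∈ F, A.Infinite) ∧
      (∀ G : Finset (Set ℕ), ↑G ⊆ F → G.Nonempty → (⋂ A ∈ G, A).Infinite) ∧
      ¬ ∃ A : Set ℕ, A.Infinite ∧ ∀ B ∈ F, (A \ B).Finite}


lemma cdh_pInt {J W : Type} [Countable W] [Infinite W]
    (hJ : Cardinal.mk J < pseudoIntersectionNumber) (A : J → Set W)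
    (hA : ∀ G : Finset J, (⋂ j ∈ G, A j).Infinite) :
    ∃ X : Set W, X.Infinite ∧ ∀ j, (X \ A j).Finite := by
  classical
  obtain ⟨hd⟩ := nonempty_denumerable W
  let e : W ≃ ℕ := Denumerable.eqv W
  by_contra hcon
  have hle : pseudoIntersectionNumber ≤ Cardinal.mk (Set.range fun j => e '' (A j)) := by
    apply csInf_le'
    refine ⟨_, rfl, ?_, ?_, ?_⟩
    · rintro _ ⟨j, rfl⟩
      have := hA {j}
      simp only [Finset.mem_singleton, Set.iInter_iInter_eq_left] at this
      exact this.image e.injective.injOn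
    · intro G hG _
      rw [← Set.image_univ, Finset.subset_set_image_iff] at hG
      obtain ⟨s, -, rfl⟩ := hG
      refine ((hA s).image e.injective.injOn).mono ?_
      rintro _ ⟨x, hx, rfl⟩
      simp only [Set.mem_iInter] at hx
      simp only [Set.mem_iInter, Finset.mem_image]
      rintro _ ⟨j, hj, rfl⟩
      exact ⟨x, hx j hj, rfl⟩
    · rintro ⟨X, hX, hXA⟩
      apply hcon
      refine ⟨e ⁻¹' X, ?_, ?_⟩
      · intro hf
        apply hX
        have := hf.image e
        rwa [Set.image_preimage_eq _ e.surjective] at this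
      · intro j
        have h1 := (hXA _ ⟨j, rfl⟩).preimage (f := e) e.injective.injOn
        refine h1.subset ?_
        rintro x ⟨hx, hxj⟩
        refine ⟨hx, ?_⟩
        rintro ⟨y, hy, hxy⟩
        exact hxj (e.injective hxy ▸ hy)
  exact absurd (hle.trans Cardinal.mk_range_le) (not_le.2 hJ)

lemma cdh_isOpen_coord {I : Type} (i : I) (c : Bool) : IsOpen {x : I → Bool | x i = c} :=
  (isOpen_discrete ({c} : Set Bool)).preimage (continuous_apply (A := fun _ : I => Bool) i)

/-- A dense set meets every finite pattern. -/
lemma cdh_dense_pattern {I : Type} {D : Set (I → Bool)} (hD : Dense D) (t : I → Bool)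
    (s : Finset I) : ∃ d ∈ D, ∀ i ∈ s, d i = t i := by
  have ho : IsOpen {x : I → Bool | ∀ i ∈ s, x i = t i} := by
    have : {x : I → Bool | ∀ i ∈ s, x i = t i} = ⋂ i ∈ s, {x | x i = t i} := by
      ext; simp
    rw [this]
    refine isOpen_biInter_finset fun i _ => ?_
    exact cdh_isOpen_coord i (t i)
  obtain ⟨d, hd, hdD⟩ := hD.inter_open_nonempty _ ho ⟨t, fun _ _ => rfl⟩
  exact ⟨d, hdD, hd⟩

lemma cdh_of_pattern {I : Type} {D : Set (I → Bool)}
    (h : ∀ (t : I → Bool) (s : Finset I), ∃ d ∈ D, ∀ i ∈ s, d i = t i) : Dense D := by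
  intro x
  rw [mem_closure_iff_nhds_basis' (s := fun s : Finset I => {y | ∀ i ∈ s, y i = x i})
    (p := fun _ => True)]
  · intro s _
    obtain ⟨d, hd, hs⟩ := h x s
    exact ⟨d, hs, hd⟩
  · constructor
    intro U
    constructor
    · intro hU
      rw [nhds_pi, Filter.mem_pi] at hU
      obtain ⟨S, hS, V, hV, hVU⟩ := hU
      refine ⟨hS.toFinset, trivial, fun y hy => hVU ?_⟩
      intro i hi
      have : y i = x i := hy i (by simpa using hi)
      rw [this]
      exact mem_of_mem_nhds (hV i)
    · rintro ⟨s, -, hs⟩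
      refine Filter.mem_of_superset ?_ hs
      have : {y : I → Bool | ∀ i ∈ s, y i = x i} = ⋂ i ∈ s, {y | y i = x i} := by
        ext; simp
      rw [this, Filter.biInter_finset_mem]
      intro i _
      exact (cdh_isOpen_coord i (x i)).mem_nhds rfl

lemma cdh_exists_nat {I : Type} [Infinite I]
    (hI : Cardinal.mk I < pseudoIntersectionNumber) {D : Set (I → Bool)}
    (hDc : D.Countable) (hD : Dense D) (t : ℕ → I → Bool) (N : ℕ → Finset I) :
    ∃ E : ℕ → D, (∀ n, ∀ i ∈ N n, (E n).1 i = t n i) ∧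
      ∀ a, {n | (E n).1 a ≠ t n a}.Finite := by
  classical
  have : Countable D := hDc
  have : Nonempty D := by
    obtain ⟨d, hd, _⟩ := cdh_dense_pattern hD (t 0) ∅
    exact ⟨⟨d, hd⟩⟩
  have hJ : Cardinal.mk (I ⊕ ℕ) < pseudoIntersectionNumber := by
    rw [Cardinal.mk_sum]
    simpa [Cardinal.add_eq_left (Cardinal.aleph0_le_mk I) (Cardinal.aleph0_le_mk I)] using hI
  let A : I ⊕ ℕ → Set (List D) := Sum.elim
    (fun a => {w | ∀ i d, w[i]? = some d → d.1 a = t i a})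
    (fun n => {w | n < w.length ∧ ∀ i d, w[i]? = some d → ∀ b ∈ N i, d.1 b = t i b})
  obtain ⟨X, hX, hXA⟩ := cdh_pInt hJ A (by
    intro G
    let GI : Finset I := G.toLeft
    let M : ℕ := G.toRight.sup id + 1
    have hg : ∀ i, ∃ d : D, ∀ b ∈ GI ∪ N i, d.1 b = t i b := fun i => by
      obtain ⟨d, hd, h⟩ := cdh_dense_pattern hD (t i) (GI ∪ N i)
      exact ⟨⟨d, hd⟩, h⟩
    choose g hg using hg
    refine Set.infinite_of_injective_forall_mem
      (f := fun n : ℕ => (List.range (n + M)).map g) ?_ ?_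
    · intro m n hmn
      have := congrArg List.length hmn
      simpa using this
    · intro n
      have key : ∀ i d, ((List.range (n + M)).map g)[i]? = some d → d = g i := by
        intro i d h
        rw [List.getElem?_map] at h
        simp only [Option.map_eq_some_iff] at h
        obtain ⟨j, hj, rfl⟩ := h
        rw [List.getElem?_eq_some_iff] at hj
        obtain ⟨_, hj⟩ := hj
        simp at hj
        rw [hj]
      simp only [Set.mem_iInter]
      rintro (a | m) hj
      · intro i d h
        rw [key i d h]
        exact hg i a (Finset.mem_union_left _ (Finset.mem_toLeft.2 hj))
      · refine ⟨?_, ?_⟩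
        · have : m ≤ G.toRight.sup id := Finset.le_sup (f := id) (Finset.mem_toRight.2 hj)
          simp only [List.length_map, List.length_range]
          omega
        · intro i d h b hb
          rw [key i d h]
          exact hg i b (Finset.mem_union_right _ hb))
  have hw : ∀ i : ℕ, ∃ w ∈ X, w ∈ A (Sum.inr i) := by
    intro i
    by_contra hcon
    push Not at hcon
    exact hX ((hXA (Sum.inr i)).subset fun w hw => ⟨hw, hcon w hw⟩)
  choose w hwX hwA using hw
  have hl : ∀ i, i < (w i).length := fun i => (hwA i).1
  refine ⟨fun i => (w i)[i]'(hl i), ?_, ?_⟩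
  · intro n b hb
    exact (hwA n).2 n _ (List.getElem?_eq_getElem (hl n)) b hb
  · intro a
    have hf := hXA (Sum.inl a)
    refine (hf.biUnion (t := fun v => {i | i < v.length}) fun v _ => Set.finite_lt_nat _).subset ?_
    intro n hn
    simp only [Set.mem_iUnion]
    refine ⟨w n, ⟨hwX n, ?_⟩, hl n⟩
    intro h
    exact hn (h n _ (List.getElem?_eq_getElem (hl n)))

lemma cdh_exists {I : Type} [Infinite I] {S : Type} [Countable S]
    (hI : Cardinal.mk I < pseudoIntersectionNumber) {D : Set (I → Bool)}
    (hDc : D.Countable) (hD : Dense D) (t : S → I → Bool) (N : S → Finset I) :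
    ∃ E : S → D, (∀ n, ∀ i ∈ N n, (E n).1 i = t n i) ∧
      ∀ a, {n | (E n).1 a ≠ t n a}.Finite := by
  obtain ⟨f, hf⟩ := exists_injective_nat S
  obtain ⟨E, h1, h2⟩ := cdh_exists_nat hI hDc hD (Function.extend f t fun _ _ => true)
    (Function.extend f N fun _ => ∅)
  refine ⟨fun s => E (f s), ?_, ?_⟩
  · intro s i hi
    have := h1 (f s) i
    rw [hf.extend_apply, hf.extend_apply] at this
    exact this hi
  · intro a
    refine ((h2 a).preimage (f := f) hf.injOn).subset ?_
    intro s hs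
    simp only [Set.mem_preimage, Set.mem_ofPred_eq]
    rw [hf.extend_apply]
    exact hs

/-- `x` and `y` agree on the first `n` of the distinguished coordinates. -/
def cdhAg {I : Type} (b : ℕ → I) (n : ℕ) (x y : I → Bool) : Prop := ∀ i < n, x (b i) = y (b i)

lemma cdhAg.symm {I : Type} {b : ℕ → I} {n : ℕ} {x y : I → Bool} (h : cdhAg b n x y) :
    cdhAg b n y x := fun i hi => (h i hi).symm

lemma cdhAg.trans {I : Type} {b : ℕ → I} {n : ℕ} {x y z : I → Bool} (h : cdhAg b n x y)
    (h' : cdhAg b n y z) : cdhAg b n x z := fun i hi => (h i hi).trans (h' i hi)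

lemma cdhAg.mono {I : Type} {b : ℕ → I} {m n : ℕ} {x y : I → Bool} (h : cdhAg b n x y)
    (hmn : m ≤ n) : cdhAg b m x y := fun i hi => h i (hi.trans_le hmn)

lemma cdhAg.succ {I : Type} {b : ℕ → I} {n : ℕ} {x y : I → Bool} (h : cdhAg b n x y)
    (h' : x (b n) = y (b n)) : cdhAg b (n + 1) x y := by
  intro i hi
  rcases Nat.lt_succ_iff_lt_or_eq.1 hi with hi | rfl
  · exact h i hi
  · exact h'

/-- The difference function of a finite partial map is determined by `N` coordinates. -/
def cdhH {I : Type} (b : ℕ → I) (P : Set ((I → Bool) × (I → Bool))) (N : ℕ) (a : I) : Prop :=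
  ∀ z ∈ P, ∀ w ∈ P, cdhAg b N z.1 w.1 → xor (z.1 a) (z.2 a) = xor (w.1 a) (w.2 a)

/-- The controlled extension relation. -/
def cdhLe {I : Type} (b : ℕ → I) (B B' : I → Set (I → Bool))
    (P P' : Set ((I → Bool) × (I → Bool))) : Prop :=
  P ⊆ P' ∧ ∀ N a, B a ⊆ Prod.fst '' P → B' a ⊆ Prod.snd '' P → cdhH b P N a → cdhH b P' N a

/-- Finite partial isometries. -/
def cdhInv {I : Type} (b : ℕ → I) (D D' : Set (I → Bool))
    (P : Set ((I → Bool) × (I → Bool))) : Prop :=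
  P.Finite ∧ P.Nonempty ∧ (∀ z ∈ P, z.1 ∈ D ∧ z.2 ∈ D') ∧
    ∀ z ∈ P, ∀ w ∈ P, ∀ n, cdhAg b n z.1 w.1 ↔ cdhAg b n z.2 w.2

lemma cdhLe.refl {I : Type} (b : ℕ → I) (B B' : I → Set (I → Bool))
    (P : Set ((I → Bool) × (I → Bool))) : cdhLe b B B' P P :=
  ⟨subset_rfl, fun _ _ _ _ h => h⟩

lemma cdhLe.trans {I : Type} {b : ℕ → I} {B B' : I → Set (I → Bool)}
    {P Q R : Set ((I → Bool) × (I → Bool))} (h : cdhLe b B B' P Q) (h' : cdhLe b B B' Q R) :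
    cdhLe b B B' P R :=
  ⟨h.1.trans h'.1, fun N a h1 h2 h3 => h'.2 N a (h1.trans (Set.image_mono h.1))
    (h2.trans (Set.image_mono h.1)) (h.2 N a h1 h2 h3)⟩

/-- One-point extension hypothesis. -/
def cdhOne {I : Type} (b : ℕ → I) (D D' : Set (I → Bool)) (B : I → Set (I → Bool)) : Prop :=
  ∀ q ∈ D, ∀ u ∈ D, ∀ u' ∈ D', ∃ q' ∈ D',
    (∀ n, cdhAg b n q u → q (b n) ≠ u (b n) → ∀ i ≤ n,
      xor (q (b i)) (q' (b i)) = xor (u (b i)) (u' (b i))) ∧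
    ∀ a, q ∉ B a → xor (q a) (q' a) = xor (u a) (u' a)

lemma cdh_firstDiff {I : Type} {b : ℕ → I} {D : Set (I → Bool)}
    (hs : ∀ x ∈ D, ∀ y ∈ D, (∀ n, x (b n) = y (b n)) → x = y)
    {x y : I → Bool} (hx : x ∈ D) (hy : y ∈ D) (hxy : x ≠ y) :
    ∃ n, cdhAg b n x y ∧ x (b n) ≠ y (b n) := by
  classical
  have : ∃ n, x (b n) ≠ y (b n) := by
    by_contra! h
    exact hxy (hs x hx y hy h)
  refine ⟨Nat.find this, fun i hi => ?_, Nat.find_spec this⟩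
  simpa using Nat.find_min this hi

lemma cdh_forth {I : Type} {b : ℕ → I} {D D' : Set (I → Bool)} {B B' : I → Set (I → Bool)}
    (hs : ∀ x ∈ D, ∀ y ∈ D, (∀ n, x (b n) = y (b n)) → x = y)
    (hone : cdhOne b D D' B) {P : Set ((I → Bool) × (I → Bool))} (hP : cdhInv b D D' P)
    {q : I → Bool} (hq : q ∈ D) :
    ∃ P', cdhInv b D D' P' ∧ cdhLe b B B' P P' ∧ q ∈ Prod.fst '' P' := by
  classical
  by_cases hqP : q ∈ Prod.fst '' P
  · exact ⟨P, hP, cdhLe.refl _ _ _ _, hqP⟩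
  obtain ⟨hfin, hne, hmem, hiso⟩ := hP
  have hex : ∀ z : (I → Bool) × (I → Bool), z ∈ P →
      ∃ n, cdhAg b n q z.1 ∧ q (b n) ≠ z.1 (b n) := fun z hz =>
    cdh_firstDiff hs hq (hmem z hz).1 fun h => hqP ⟨z, hz, h.symm⟩
  choose! d hd1 hd2 using hex
  obtain ⟨⟨u, u'⟩, hu, hmax⟩ := Set.exists_max_image P d hfin hne
  have hlt : ∀ w ∈ P, ∀ m, cdhAg b m q w.1 → m ≤ d (u, u') := by
    intro w hw m hm
    by_contra hlt
    exact hd2 w hw (hm (d w) ((hmax w hw).trans_lt (not_le.1 hlt)))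
  set n := d (u, u') with hn
  have hqu : cdhAg b n q u := hd1 _ hu
  have hqu2 : q (b n) ≠ u (b n) := hd2 _ hu
  obtain ⟨q', hq', hc1, hc2⟩ := hone q hq u (hmem _ hu).1 u' (hmem _ hu).2
  have hc1 := hc1 n hqu hqu2
  have hqu' : cdhAg b n q' u' := by
    intro i hi
    have h1 := hc1 i hi.le
    rw [hqu i hi] at h1
    simpa using h1
  have hqu2' : q' (b n) ≠ u' (b n) := by
    intro h
    have h1 := hc1 n le_rfl
    rw [h] at h1
    simp at h1
    exact hqu2 h1
  have hnew : ∀ w ∈ P, ∀ m, cdhAg b m q w.1 ↔ cdhAg b m q' w.2 := by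
    intro w hw m
    by_cases hm : m ≤ n
    · have h1 := hiso _ hu w hw m
      constructor
      · intro h
        exact (hqu'.mono hm).trans (h1.1 ((hqu.mono hm).symm.trans h))
      · intro h
        exact (hqu.mono hm).trans (h1.2 ((hqu'.mono hm).symm.trans h))
    · constructor
      · intro h
        exact absurd (hlt w hw m h) hm
      · intro h
        exfalso
        have h' : cdhAg b (n + 1) q' w.2 := h.mono (by omega)
        have h2 : cdhAg b n u w.1 :=
          (hiso _ hu w hw n).2 (hqu'.symm.trans (h'.mono (Nat.le_succ n)))
        have h3 : cdhAg b n q w.1 := hqu.trans h2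
        have h4 : q (b n) ≠ w.1 (b n) := by
          intro h5
          have := hlt w hw _ (h3.succ h5)
          omega
        have h5 : u (b n) = w.1 (b n) := by
          revert hqu2 h4
          cases q (b n) <;> cases u (b n) <;> cases w.1 (b n) <;> simp
        have h6 : cdhAg b (n + 1) u' w.2 := (hiso _ hu w hw (n + 1)).1 (h2.succ h5)
        exact hqu2' (h'.trans h6.symm n (Nat.lt_succ_self n))
  refine ⟨insert (q, q') P, ⟨hfin.insert _, Set.insert_nonempty _ _, ?_, ?_⟩,
    ⟨Set.subset_insert _ _, ?_⟩, ⟨_, Set.mem_insert _ _, rfl⟩⟩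
  · rintro z (rfl | hz)
    · exact ⟨hq, hq'⟩
    · exact hmem z hz
  · rintro z (rfl | hz) w (rfl | hw) m
    · exact ⟨fun _ _ _ => rfl, fun _ _ _ => rfl⟩
    · exact hnew w hw m
    · exact ⟨fun h => ((hnew z hz m).1 h.symm).symm, fun h => ((hnew z hz m).2 h.symm).symm⟩
    · exact hiso z hz w hw m
  · intro N a hB _ hH
    have hqB : q ∉ B a := fun h => hqP (hB h)
    have key : ∀ w ∈ P, cdhAg b N q w.1 → xor (q a) (q' a) = xor (w.1 a) (w.2 a) := by
      intro w hw h
      have hN := hlt w hw N h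
      exact (hc2 a hqB).trans (hH _ hu w hw ((hqu.mono hN).symm.trans h))
    rintro z (rfl | hz) w (rfl | hw) h
    · rfl
    · exact key w hw h
    · exact (key z hz h.symm).symm
    · exact hH z hz w hw h

lemma cdhInv.swap {I : Type} {b : ℕ → I} {D D' : Set (I → Bool)}
    {P : Set ((I → Bool) × (I → Bool))} (hP : cdhInv b D D' P) :
    cdhInv b D' D (Prod.swap '' P) := by
  obtain ⟨hfin, hne, hmem, hiso⟩ := hP
  refine ⟨hfin.image _, hne.image _, ?_, ?_⟩
  · rintro _ ⟨z, hz, rfl⟩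
    exact (hmem z hz).symm
  · rintro _ ⟨z, hz, rfl⟩ _ ⟨w, hw, rfl⟩ n
    exact (hiso z hz w hw n).symm

lemma cdhH.swap {I : Type} {b : ℕ → I} {D D' : Set (I → Bool)}
    {P : Set ((I → Bool) × (I → Bool))} (hP : cdhInv b D D' P) {N : ℕ} {a : I}
    (h : cdhH b P N a) : cdhH b (Prod.swap '' P) N a := by
  rintro _ ⟨z, hz, rfl⟩ _ ⟨w, hw, rfl⟩ hag
  have := h z hz w hw ((hP.2.2.2 z hz w hw N).2 hag)
  simpa [Bool.xor_comm] using this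

lemma cdh_back {I : Type} {b : ℕ → I} {D D' : Set (I → Bool)} {B B' : I → Set (I → Bool)}
    (hs : ∀ x ∈ D', ∀ y ∈ D', (∀ n, x (b n) = y (b n)) → x = y)
    (hone : cdhOne b D' D B') {P : Set ((I → Bool) × (I → Bool))} (hP : cdhInv b D D' P)
    {q : I → Bool} (hq : q ∈ D') :
    ∃ P', cdhInv b D D' P' ∧ cdhLe b B B' P P' ∧ q ∈ Prod.snd '' P' := by
  obtain ⟨Q, hQ, hPQ, hqQ⟩ := cdh_forth (B' := B) hs hone hP.swap hq
  have hss : ∀ R : Set ((I → Bool) × (I → Bool)), Prod.swap '' (Prod.swap '' R) = R := by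
    intro R
    rw [Set.image_image]; simp
  refine ⟨Prod.swap '' Q, hQ.swap, ⟨?_, ?_⟩, ?_⟩
  · rw [← hss P]
    exact Set.image_mono hPQ.1
  · intro N a h1 h2 h3
    refine (hPQ.2 N a ?_ ?_ (h3.swap hP)).swap hQ
    · rw [Set.image_image]; simpa using h2
    · rw [Set.image_image]; simpa using h1
  · rw [Set.image_image]; simpa using hqQ

lemma cdh_relation {I : Type} {b : ℕ → I} {D D' : Set (I → Bool)} {B B' : I → Set (I → Bool)}
    (hDc : D.Countable) (hDc' : D'.Countable) (hDn : D.Nonempty) (hDn' : D'.Nonempty)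
    (hs : ∀ x ∈ D, ∀ y ∈ D, (∀ n, x (b n) = y (b n)) → x = y)
    (hs' : ∀ x ∈ D', ∀ y ∈ D', (∀ n, x (b n) = y (b n)) → x = y)
    (hone : cdhOne b D D' B) (hone' : cdhOne b D' D B')
    (hB : ∀ a, (B a).Finite) (hB' : ∀ a, (B' a).Finite)
    (hBD : ∀ a, B a ⊆ D) (hBD' : ∀ a, B' a ⊆ D') :
    ∃ R : Set ((I → Bool) × (I → Bool)), (∀ z ∈ R, z.1 ∈ D ∧ z.2 ∈ D') ∧
      (∀ x ∈ D, x ∈ Prod.fst '' R) ∧ (∀ x ∈ D', x ∈ Prod.snd '' R) ∧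
      (∀ n, cdhH b R n (b n)) ∧ ∀ a, ∃ N, cdhH b R N a := by
  classical
  obtain ⟨d, rfl⟩ := hDc.exists_eq_range hDn
  obtain ⟨d', rfl⟩ := hDc'.exists_eq_range hDn'
  set D := Set.range d
  set D' := Set.range d'
  have step : ∀ (k : ℕ) (P : {P // cdhInv b D D' P}), ∃ Q : {P // cdhInv b D D' P},
      cdhLe b B B' P.1 Q.1 ∧ d k ∈ Prod.fst '' Q.1 ∧ d' k ∈ Prod.snd '' Q.1 := by
    rintro k ⟨P, hP⟩
    obtain ⟨Q, hQ, hPQ, h1⟩ := cdh_forth (B' := B') hs hone hP (q := d k) ⟨k, rfl⟩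
    obtain ⟨R, hR, hQR, h2⟩ := cdh_back (B := B) hs' hone' hQ (q := d' k) ⟨k, rfl⟩
    exact ⟨⟨R, hR⟩, hPQ.trans hQR, Set.image_mono hQR.1 h1, h2⟩
  choose F hF1 hF2 hF3 using step
  have hinit : cdhInv b D D' {(d 0, d' 0)} := by
    refine ⟨Set.finite_singleton _, Set.singleton_nonempty _, ?_, ?_⟩
    · rintro _ rfl
      exact ⟨⟨0, rfl⟩, ⟨0, rfl⟩⟩
    · rintro _ rfl _ rfl n
      exact ⟨fun _ _ _ => rfl, fun _ _ _ => rfl⟩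
  let P : ℕ → {P // cdhInv b D D' P} := fun k => Nat.rec ⟨_, hinit⟩ (fun k P => F k P) k
  have hPs : ∀ k, P (k + 1) = F k (P k) := fun k => rfl
  have hmono : ∀ k l, k ≤ l → cdhLe b B B' (P k).1 (P l).1 := by
    intro k l hkl
    induction l, hkl using Nat.le_induction with
    | base => exact cdhLe.refl _ _ _ _
    | succ l _ ih => exact ih.trans (hF1 l (P l))
  let R : Set ((I → Bool) × (I → Bool)) := ⋃ k, (P k).1
  have hR2 : ∀ z ∈ R, ∀ w ∈ R, ∀ k, ∃ l, k ≤ l ∧ z ∈ (P l).1 ∧ w ∈ (P l).1 := by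
    intro z hz w hw k
    obtain ⟨i, hi⟩ := Set.mem_iUnion.1 hz
    obtain ⟨j, hj⟩ := Set.mem_iUnion.1 hw
    refine ⟨max k (max i j), le_max_left _ _, (hmono i _ ?_).1 hi, (hmono j _ ?_).1 hj⟩ <;> simp
  have hdom : ∀ k, d k ∈ Prod.fst '' (P (k + 1)).1 := fun k => hF2 k (P k)
  have hran : ∀ k, d' k ∈ Prod.snd '' (P (k + 1)).1 := fun k => hF3 k (P k)
  refine ⟨R, ?_, ?_, ?_, ?_, ?_⟩
  · intro z hz
    obtain ⟨k, hk⟩ := Set.mem_iUnion.1 hz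
    exact (P k).2.2.2.1 z hk
  · rintro _ ⟨k, rfl⟩
    exact Set.image_mono (Set.subset_iUnion (fun k => (P k).1) (k + 1)) (hdom k)
  · rintro _ ⟨k, rfl⟩
    exact Set.image_mono (Set.subset_iUnion (fun k => (P k).1) (k + 1)) (hran k)
  · intro n z hz w hw hag
    obtain ⟨l, -, hzl, hwl⟩ := hR2 z hz w hw 0
    have hiso := (P l).2.2.2.2 z hzl w hwl
    have hag' := (hiso n).1 hag
    by_cases h : z.1 (b n) = w.1 (b n)
    · have h2 := (hiso (n + 1)).1 (hag.succ h) n (Nat.lt_succ_self n)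
      rw [h, h2]
    · have h2 : z.2 (b n) ≠ w.2 (b n) := fun h3 =>
        h ((hiso (n + 1)).2 (hag'.succ h3) n (Nat.lt_succ_self n))
      revert h h2
      cases z.1 (b n) <;> cases w.1 (b n) <;> cases z.2 (b n) <;> cases w.2 (b n) <;> simp
  · intro a
    have hfinD : ∀ S : Set (I → Bool), S.Finite → S ⊆ D →
        ∃ k, ∀ l, k ≤ l → S ⊆ Prod.fst '' (P l).1 := by
      intro S hS hSD
      have : ∀ x ∈ S, ∃ k, d k = x := fun x hx => hSD hx
      choose! f hf using this
      obtain ⟨k, hk⟩ := (hS.image f).bddAbove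
      refine ⟨k + 1, fun l hl x hx => ?_⟩
      rw [← hf x hx]
      have : f x ≤ k := hk ⟨x, hx, rfl⟩
      exact Set.image_mono (hmono (f x + 1) l (by omega)).1 (hdom _)
    have hfinD' : ∀ S : Set (I → Bool), S.Finite → S ⊆ D' →
        ∃ k, ∀ l, k ≤ l → S ⊆ Prod.snd '' (P l).1 := by
      intro S hS hSD
      have : ∀ x ∈ S, ∃ k, d' k = x := fun x hx => hSD hx
      choose! f hf using this
      obtain ⟨k, hk⟩ := (hS.image f).bddAbove
      refine ⟨k + 1, fun l hl x hx => ?_⟩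
      rw [← hf x hx]
      have : f x ≤ k := hk ⟨x, hx, rfl⟩
      exact Set.image_mono (hmono (f x + 1) l (by omega)).1 (hran _)
    obtain ⟨k1, hk1⟩ := hfinD _ (hB a) (hBD a)
    obtain ⟨k2, hk2⟩ := hfinD' _ (hB' a) (hBD' a)
    set k := max k1 k2
    obtain ⟨hfin, hne, hmem, hiso⟩ := (P k).2
    have hN : ∃ N, ∀ p ∈ (P k).1 ×ˢ (P k).1, cdhAg b N p.1.1 p.2.1 → p.1 = p.2 := by
      have hex : ∀ p ∈ (P k).1 ×ˢ (P k).1, ∃ N, cdhAg b N p.1.1 p.2.1 → p.1 = p.2 := by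
        rintro ⟨z, w⟩ ⟨hz, hw⟩
        by_contra! hcon
        apply (hcon 0).2
        have h1 : ∀ n, z.1 (b n) = w.1 (b n) := fun n => (hcon (n + 1)).1 n (Nat.lt_succ_self n)
        have h2 : ∀ n, z.2 (b n) = w.2 (b n) := fun n =>
          (hiso z hz w hw (n + 1)).1 (hcon (n + 1)).1 n (Nat.lt_succ_self n)
        exact Prod.ext (hs _ (hmem z hz).1 _ (hmem w hw).1 h1)
          (hs' _ (hmem z hz).2 _ (hmem w hw).2 h2)
      choose! f hf using hex
      obtain ⟨N, hN⟩ := ((hfin.prod hfin).image f).bddAbove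
      exact ⟨N, fun p hp h => hf p hp (h.mono (hN ⟨p, hp, rfl⟩))⟩
    obtain ⟨N, hN⟩ := hN
    refine ⟨N, fun z hz w hw hag => ?_⟩
    obtain ⟨l, hkl, hzl, hwl⟩ := hR2 z hz w hw k
    refine (hmono k l hkl).2 N a (hk1 k (le_max_left _ _)) (hk2 k (le_max_right _ _)) ?_
      z hzl w hwl hag
    intro z hz w hw h
    have h := hN (z, w) ⟨hz, hw⟩ h
    simp only at h
    rw [h]

lemma cdh_one_exists {I : Type} [Infinite I]
    (hI : Cardinal.mk I < pseudoIntersectionNumber) {b : ℕ → I} {D D' : Set (I → Bool)}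
    (hDc : D.Countable) (hDc' : D'.Countable) (hD' : Dense D') :
    ∃ B : I → Set (I → Bool), cdhOne b D D' B ∧ (∀ a, (B a).Finite) ∧ ∀ a, B a ⊆ D := by
  classical
  have : Countable D := hDc
  have : Countable D' := hDc'
  let nn : (I → Bool) → (I → Bool) → ℕ := fun q u =>
    if h : ∃ n, q (b n) ≠ u (b n) then Nat.find h else 0
  obtain ⟨E, h1, h2⟩ := cdh_exists (S := D × D × D') hI hDc' hD'
    (fun s a => xor (s.1.1 a) (xor (s.2.1.1 a) (s.2.2.1 a)))
    (fun s => (Finset.range (nn s.1.1 s.2.1.1 + 1)).image b)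
  refine ⟨fun a => (fun s : D × D × D' => s.1.1) ''
    {s | (E s).1 a ≠ xor (s.1.1 a) (xor (s.2.1.1 a) (s.2.2.1 a))}, ?_, ?_, ?_⟩
  · intro q hq u hu u' hu'
    let s : D × D × D' := (⟨q, hq⟩, ⟨u, hu⟩, ⟨u', hu'⟩)
    refine ⟨(E s).1, (E s).2, ?_, ?_⟩
    · intro n hag hne i hi
      have hex : ∃ n, q (b n) ≠ u (b n) := ⟨n, hne⟩
      have hnn : n ≤ nn q u := by
        simp only [nn, dif_pos hex]
        by_contra hlt
        exact Nat.find_spec hex (hag _ (not_le.1 hlt))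
      have h3 := h1 s (b i) (Finset.mem_image_of_mem _ (Finset.mem_range.2 (by
        show i < nn q u + 1
        omega)))
      rw [h3]
      simp [s]
    · intro a ha
      have h3 : (E s).1 a = xor (s.1.1 a) (xor (s.2.1.1 a) (s.2.2.1 a)) := by
        by_contra hcon
        exact ha ⟨s, hcon, rfl⟩
      rw [h3]
      simp [s]
  · intro a
    exact (h2 a).image _
  · rintro a _ ⟨s, -, rfl⟩
    exact s.1.2

lemma cdh_coords {I : Type} [Infinite I] {D : Set (I → Bool)} (hDc : D.Countable) :
    ∃ b : ℕ → I, Function.Injective b ∧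
      ∀ x ∈ D, ∀ y ∈ D, (∀ n, x (b n) = y (b n)) → x = y := by
  classical
  have : Countable D := hDc
  let i0 : ℕ ↪ I := Infinite.natEmbedding I
  let f : D × D → I := fun p => if h : ∃ i, p.1.1 i ≠ p.2.1 i then h.choose else i0 0
  let S : Set I := Set.range i0 ∪ Set.range f
  have hSc : S.Countable := (Set.countable_range _).union (Set.countable_range _)
  have hSi : S.Infinite := (Set.infinite_range_of_injective i0.injective).mono Set.subset_union_left
  have : Countable S := hSc
  have : Infinite S := hSi.to_subtype
  obtain ⟨hd⟩ := nonempty_denumerable S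
  let e : S ≃ ℕ := Denumerable.eqv S
  refine ⟨fun n => (e.symm n).1, Subtype.val_injective.comp e.symm.injective, ?_⟩
  intro x hx y hy h
  by_contra hxy
  have hex : ∃ i, x i ≠ y i := by
    by_contra! h
    exact hxy (funext h)
  have hf : f (⟨x, hx⟩, ⟨y, hy⟩) = hex.choose := dif_pos hex
  have hS : hex.choose ∈ S := Or.inr ⟨_, hf⟩
  have := h (e ⟨_, hS⟩)
  simp only [Equiv.symm_apply_apply] at this
  exact hex.choose_spec this

lemma cdh_lt {I : Type} [Infinite I] (hI : Cardinal.mk I < pseudoIntersectionNumber) :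
    IsCDH (I → Bool) := by
  classical
  intro D D' hDc hD hDc' hD'
  obtain ⟨b, hb, hs⟩ := cdh_coords (hDc.union hDc')
  obtain ⟨B, hone, hB, hBD⟩ := cdh_one_exists hI (b := b) hDc hDc' hD'
  obtain ⟨B', hone', hB', hBD'⟩ := cdh_one_exists hI (b := b) hDc' hDc hD
  obtain ⟨R, hmem, hdom, hran, hRb, hRa⟩ := cdh_relation hDc hDc' hD.nonempty hD'.nonempty
    (fun x hx y hy => hs x (Or.inl hx) y (Or.inl hy))
    (fun x hx y hy => hs x (Or.inr hx) y (Or.inr hy)) hone hone' hB hB' hBD hBD'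
  have hN : ∃ N : I → ℕ, (∀ a, cdhH b R (N a) a) ∧ ∀ n, N (b n) = n := by
    choose N0 hN0 using hRa
    refine ⟨fun a => if h : ∃ n, b n = a then h.choose else N0 a, ?_, ?_⟩
    · intro a
      by_cases h : ∃ n, b n = a
      · simp only [dif_pos h]
        have := hRb h.choose
        rwa [h.choose_spec] at this
      · simp only [dif_neg h]
        exact hN0 a
    · intro n
      have h : ∃ m, b m = b n := ⟨n, rfl⟩
      simp only [dif_pos h]
      exact hb h.choose_spec
  obtain ⟨N, hNH, hNb⟩ := hN
  have hz : ∀ (x : I → Bool) (a : I), ∃ z ∈ R, cdhAg b (N a) z.1 x := by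
    intro x a
    obtain ⟨d, hd, h⟩ := cdh_dense_pattern hD x ((Finset.range (N a)).image b)
    obtain ⟨z, hz, rfl⟩ := hdom d hd
    exact ⟨z, hz, fun i hi => h _ (Finset.mem_image_of_mem _ (Finset.mem_range.2 hi))⟩
  choose Z hZR hZ using hz
  let f : (I → Bool) → I → Bool := fun x a => xor ((Z x a).1 a) ((Z x a).2 a)
  have hf : ∀ x y a, cdhAg b (N a) x y → f x a = f y a := by
    intro x y a h
    exact hNH a _ (hZR x a) _ (hZR y a) (((hZ x a).trans h).trans (hZ y a).symm)
  let h : (I → Bool) → I → Bool := fun x a => xor (x a) (f x a)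
  have hR : ∀ z ∈ R, h z.1 = z.2 := by
    intro z hz
    funext a
    have : f z.1 a = xor (z.1 a) (z.2 a) := hNH a _ (hZR z.1 a) z hz (hZ z.1 a)
    show xor (z.1 a) (f z.1 a) = z.2 a
    rw [this]
    simp
  have hcont : Continuous h := by
    refine continuous_pi fun a => ?_
    rw [continuous_discrete_rng]
    intro c
    rw [isOpen_iff_mem_nhds]
    intro x hx
    have ho : IsOpen ({y : I → Bool | y a = x a} ∩ ⋂ i ∈ Finset.range (N a),
        {y : I → Bool | y (b i) = x (b i)}) :=
      (cdh_isOpen_coord a _).inter (isOpen_biInter_finset fun i _ => cdh_isOpen_coord _ _)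
    refine Filter.mem_of_superset (ho.mem_nhds ⟨rfl, by simp⟩) ?_
    rintro y ⟨hy1, hy2⟩
    have hag : cdhAg b (N a) y x := by
      intro i hi
      simp only [Set.mem_iInter, Finset.mem_range] at hy2
      exact hy2 i hi
    have h1 : h y a = h x a := by
      show xor (y a) (f y a) = xor (x a) (f x a)
      rw [hf y x a hag, show y a = x a from hy1]
    show h y a ∈ ({c} : Set Bool)
    rw [h1]
    exact hx
  have hinj : Function.Injective h := by
    intro x y hxy
    have hpt : ∀ a, cdhAg b (N a) x y → x a = y a := by
      intro a hag
      have h1 : xor (x a) (f x a) = xor (y a) (f y a) := congrFun hxy a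
      rw [hf x y a hag] at h1
      simpa using h1
    have hall : ∀ n, cdhAg b n x y := by
      intro n
      induction n with
      | zero => intro i hi; omega
      | succ n ih => exact ih.succ (hpt (b n) (by rw [hNb]; exact ih))
    exact funext fun a => hpt a (hall _)
  have hsurj : Function.Surjective h := by
    have hcl : IsClosed (Set.range h) := (isCompact_range hcont).isClosed
    have hsub : D' ⊆ Set.range h := by
      intro x hx
      obtain ⟨z, hz, rfl⟩ := hran x hx
      exact ⟨z.1, hR z hz⟩
    have : closure D' ⊆ Set.range h := closure_minimal hsub hcl
    rw [hD'.closure_eq] at this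
    exact fun y => this (Set.mem_univ y)
  let e : (I → Bool) ≃ (I → Bool) := Equiv.ofBijective h ⟨hinj, hsurj⟩
  have he : Continuous e := hcont
  refine ⟨he.homeoOfEquivCompactToT2, ?_⟩
  show h '' D = D'
  ext y
  constructor
  · rintro ⟨x, hx, rfl⟩
    obtain ⟨z, hz, rfl⟩ := hdom x hx
    rw [hR z hz]
    exact (hmem z hz).2
  · intro hy
    obtain ⟨z, hz, rfl⟩ := hran y hy
    exact ⟨z.1, (hmem z hz).1, hR z hz⟩

lemma cdh_finite {I : Type} [Finite I] : IsCDH (I → Bool) := by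
  intro D D' _ hD _ hD'
  rw [dense_discrete] at hD hD'
  subst hD hD'
  exact ⟨Homeomorph.refl _, by simp⟩

lemma cdh_family : ∃ F : Set (Set ℕ), Cardinal.mk F = pseudoIntersectionNumber ∧
      (∀ A ∈ F, A.Infinite) ∧
      (∀ G : Finset (Set ℕ), ↑G ⊆ F → G.Nonempty → (⋂ A ∈ G, A).Infinite) ∧
      ¬ ∃ A : Set ℕ, A.Infinite ∧ ∀ B ∈ F, (A \ B).Finite := by
  have hne : {c : Cardinal |
    ∃ F : Set (Set ℕ), Cardinal.mk F = c ∧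
      (∀ A ∈ F, A.Infinite) ∧
      (∀ G : Finset (Set ℕ), ↑G ⊆ F → G.Nonempty → (⋂ A ∈ G, A).Infinite) ∧
      ¬ ∃ A : Set ℕ, A.Infinite ∧ ∀ B ∈ F, (A \ B).Finite}.Nonempty := by
    have hinf : ∀ A ∈ Filter.hyperfilter ℕ, A.Infinite := by
      intro A hA hf
      exact Filter.notMem_hyperfilter_of_finite hf hA
    refine ⟨_, {A | A ∈ Filter.hyperfilter ℕ}, rfl, hinf, ?_, ?_⟩
    · intro G hG _
      exact hinf _ ((Filter.biInter_finset_mem G).2 fun A hA => hG hA)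
    · rintro ⟨A, hA, h⟩
      obtain ⟨f, hfA⟩ : ∃ f : ℕ ↪ ℕ, Set.range f ⊆ A := by
        have := hA.natEmbedding
        exact ⟨this.trans (Function.Embedding.subtype _), by
          rintro _ ⟨n, rfl⟩; exact (this n).2⟩
      let C : Set ℕ := Set.range fun n => f (2 * n)
      let C' : Set ℕ := Set.range fun n => f (2 * n + 1)
      have hC : C.Infinite := Set.infinite_range_of_injective fun m n h => by
        have := f.injective h; omega
      have hC' : C'.Infinite := Set.infinite_range_of_injective fun m n h => by
        have := f.injective h; omega
      rcases Ultrafilter.mem_or_compl_mem (Filter.hyperfilter ℕ) C with h1 | h1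
      · refine hC' ((h C h1).subset ?_)
        rintro _ ⟨n, rfl⟩
        refine ⟨hfA ⟨_, rfl⟩, ?_⟩
        rintro ⟨m, hm⟩
        have := f.injective hm
        omega
      · refine hC ((h Cᶜ h1).subset ?_)
        rintro _ ⟨n, rfl⟩
        exact ⟨hfA ⟨_, rfl⟩, fun h => h ⟨n, rfl⟩⟩
  exact csInf_mem hne

/-- Separability of `2^I` for `I` of size at most continuum. -/
lemma cdh_separable {I : Type} (g : I → Set ℕ) (hg : Function.Injective g) :
    ∃ e : ℕ → I → Bool, ∀ (t : I → Bool) (s : Finset I), ∃ k, ∀ i ∈ s, e k i = t i := by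
  classical
  let T := Finset (Finset ℕ) × ℕ
  let r : ℕ → I → Finset ℕ := fun n i => (Finset.range n).filter (· ∈ g i)
  obtain ⟨φ, hφ⟩ := exists_surjective_nat T
  refine ⟨fun k i => decide (r (φ k).2 i ∈ (φ k).1), ?_⟩
  intro t s
  have hsep : ∃ n, ∀ p ∈ s ×ˢ s, r n p.1 = r n p.2 → p.1 = p.2 := by
    have hex : ∀ p ∈ s ×ˢ s, ∃ n, ∀ m, n ≤ m → r m p.1 = r m p.2 → p.1 = p.2 := by
      rintro ⟨i, j⟩ -
      by_cases hij : i = j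
      · exact ⟨0, fun _ _ _ => hij⟩
      · have : ∃ x, ¬ (x ∈ g i ↔ x ∈ g j) := by
          by_contra! h
          exact hij (hg (Set.ext h))
        obtain ⟨x, hx⟩ := this
        refine ⟨x + 1, fun m hm h => absurd ?_ hx⟩
        have := Finset.ext_iff.1 h x
        simp only [r, Finset.mem_filter, Finset.mem_range] at this
        have hxm : x < m := by omega
        simpa [hxm] using this
    choose! f hf using hex
    exact ⟨(s ×ˢ s).sup f, fun p hp => hf p hp _ (Finset.le_sup hp)⟩
  obtain ⟨n, hn⟩ := hsep
  obtain ⟨k, hk⟩ := hφ ((s.filter (t · = true)).image (r n), n)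
  refine ⟨k, fun i hi => ?_⟩
  simp only [hk]
  cases hti : t i with
  | true =>
    simp only [decide_eq_true_eq]
    exact Finset.mem_image_of_mem _ (Finset.mem_filter.2 ⟨hi, hti⟩)
  | false =>
    simp only [decide_eq_false_iff_not, Finset.mem_image, Finset.mem_filter]
    rintro ⟨j, ⟨hj, htj⟩, hji⟩
    have := hn (j, i) (Finset.mk_mem_product hj hi) hji
    simp only at this
    rw [this, hti] at htj
    exact Bool.noConfusion htj

lemma cdh_not {I : Type} (hI : Cardinal.mk I = pseudoIntersectionNumber) :
    ¬ IsCDH (I → Bool) := by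
  classical
  obtain ⟨F, hF, -, hcen, hno⟩ := cdh_family
  obtain ⟨g⟩ : Nonempty (I ≃ F) := Cardinal.eq.1 (hI.trans hF.symm)
  let A : I → Set ℕ := fun i => (g i).1
  have hcenA : ∀ s : Finset I, (⋂ i ∈ s, A i).Infinite := by
    intro s
    rcases s.eq_empty_or_nonempty with rfl | hs
    · simpa using Set.infinite_univ
    · have := hcen (s.image A) (by
        intro x hx
        simp only [Finset.coe_image, Set.mem_image] at hx
        obtain ⟨i, -, rfl⟩ := hx
        exact (g i).2) (hs.image _)
      simpa using this
  have hnoA : ∀ X : Set ℕ, X.Infinite → ∃ i, (X \ A i).Infinite := by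
    intro X hX
    by_contra! h
    refine hno ⟨X, hX, fun B hB => ?_⟩
    have := h (g.symm ⟨B, hB⟩)
    simpa [A] using this
  have hIinf : Infinite I := by
    by_contra hfin
    rw [not_infinite_iff_finite] at hfin
    have := Fintype.ofFinite I
    obtain ⟨i, hi⟩ := hnoA _ (hcenA Finset.univ)
    apply hi
    convert Set.finite_empty
    ext x
    simp only [Finset.mem_univ, Set.iInter_true, Set.mem_sdiff, Set.mem_iInter,
      Set.mem_empty_iff_false, iff_false, not_and, not_not]
    exact fun h => h i
  obtain ⟨e, he⟩ := cdh_separable A (Subtype.val_injective.comp g.injective)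
  let K : Set ℕ := ⋂ i, A i
  have hK : K.Finite := by
    by_contra hK
    obtain ⟨i, hi⟩ := hnoA K hK
    apply hi
    convert Set.finite_empty
    ext x
    simp only [Set.mem_sdiff, Set.mem_empty_iff_false, iff_false, not_and, not_not]
    exact fun h => Set.mem_iInter.1 h i
  let p : I → Bool := fun _ => false
  let dd : ℕ → ℕ → I → Bool := fun m k i => if m ∈ A i then e k i else true
  let D2 : Set (I → Bool) := insert p (⋃ m ∈ Kᶜ, Set.range (dd m))
  have hD2c : D2.Countable := by
    refine Set.Countable.insert _ ?_
    exact Set.Countable.biUnion (Set.to_countable _) fun m _ => Set.countable_range _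
  have hD2 : Dense D2 := by
    apply cdh_of_pattern
    intro t s
    obtain ⟨m, hm, hmK⟩ := ((hcenA s).sdiff hK).nonempty
    obtain ⟨k, hk⟩ := he t s
    refine ⟨dd m k, Or.inr ?_, ?_⟩
    · simp only [Set.mem_iUnion]
      exact ⟨m, hmK, k, rfl⟩
    · intro i hi
      have : m ∈ A i := by
        simp only [Set.mem_iInter] at hm
        exact hm i hi
      simp only [dd, if_pos this]
      exact hk i hi
  let i0 : ℕ ↪ I := Infinite.natEmbedding I
  let fl : (I → Bool) → Finset ℕ → I → Bool := fun x s i => xor (x i) (decide (i ∈ s.map i0))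
  let D1 : Set (I → Bool) := Set.range fun q : ℕ × Finset ℕ => fl (e q.1) q.2
  have hD1c : D1.Countable := Set.countable_range _
  have hD1 : Dense D1 := by
    apply cdh_of_pattern
    intro t s
    obtain ⟨k, hk⟩ := he t s
    refine ⟨_, ⟨(k, ∅), rfl⟩, ?_⟩
    intro i hi
    simp only [fl]
    simpa using hk i hi
  have hseq : ∀ x ∈ D1, ∃ y : ℕ → I → Bool, (∀ n, y n ∈ D1 ∧ y n ≠ x) ∧
      ∀ i, ∀ᶠ n in Filter.atTop, y n i = x i := by
    rintro _ ⟨⟨k, s⟩, rfl⟩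
    refine ⟨fun n => fl (e k) (symmDiff s {n}), fun n => ⟨⟨(k, _), rfl⟩, ?_⟩, ?_⟩
    · intro h
      have := congrFun h (i0 n)
      simp only [fl, Bool.xor_right_inj, decide_eq_decide, Finset.mem_map'] at this
      simp [Finset.mem_symmDiff] at this
    · intro i
      have hev : ∀ᶠ n in Filter.atTop, i0 n ≠ i := by
        by_cases hi : ∃ m, i0 m = i
        · obtain ⟨m, rfl⟩ := hi
          filter_upwards [Filter.eventually_gt_atTop m] with n hn h
          exact hn.ne' (i0.injective h)
        · exact Filter.Eventually.of_forall fun n h => hi ⟨n, h⟩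
      filter_upwards [hev] with n hn
      simp only [fl, Bool.xor_right_inj, decide_eq_decide, Finset.mem_map]
      constructor
      · rintro ⟨m, hm, rfl⟩
        refine ⟨m, ?_, rfl⟩
        have : m ≠ n := fun h => hn (h ▸ rfl)
        simpa [Finset.mem_symmDiff, this] using hm
      · rintro ⟨m, hm, rfl⟩
        refine ⟨m, ?_, rfl⟩
        have : m ≠ n := fun h => hn (h ▸ rfl)
        simpa [Finset.mem_symmDiff, this] using hm
  intro hcdh
  obtain ⟨h, hh⟩ := hcdh D1 D2 hD1c hD1 hD2c hD2
  obtain ⟨x, hx, hxp⟩ : p ∈ h '' D1 := hh ▸ Set.mem_insert _ _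
  obtain ⟨y, hy1, hy2⟩ := hseq x hx
  have hlim : Filter.Tendsto y Filter.atTop (nhds x) := by
    rw [tendsto_pi_nhds]
    intro i
    exact tendsto_nhds_of_eventually_eq (hy2 i)
  have hlim2 : Filter.Tendsto (fun n => h (y n)) Filter.atTop (nhds p) := by
    rw [← hxp]
    exact (h.continuous.tendsto x).comp hlim
  have hev : ∀ i, ∀ᶠ n in Filter.atTop, h (y n) i = false := by
    intro i
    exact hlim2.eventually ((cdh_isOpen_coord i false).mem_nhds rfl)
  have hform : ∀ n, ∃ m, m ∉ K ∧ ∃ k, dd m k = h (y n) := by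
    intro n
    have h1 : h (y n) ∈ D2 := hh ▸ ⟨_, (hy1 n).1, rfl⟩
    rcases h1 with h1 | h1
    · exact absurd (h.injective (h1.trans hxp.symm)) (hy1 n).2
    · simp only [Set.mem_iUnion] at h1
      obtain ⟨m, hm, k, hk⟩ := h1
      exact ⟨m, hm, k, hk⟩
  choose m hmK k hmk using hform
  have hevm : ∀ i, ∀ᶠ n in Filter.atTop, m n ∈ A i := by
    intro i
    filter_upwards [hev i] with n hn
    by_contra hcon
    rw [← hmk n] at hn
    simp [dd, hcon] at hn
  by_cases hr : (Set.range m).Infinite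
  · obtain ⟨i, hi⟩ := hnoA _ hr
    apply hi
    obtain ⟨n0, hn0⟩ := Filter.eventually_atTop.1 (hevm i)
    refine ((Set.finite_lt_nat n0).image m).subset ?_
    rintro _ ⟨⟨n, rfl⟩, hn⟩
    refine ⟨n, ?_, rfl⟩
    by_contra hlt
    exact hn (hn0 n (not_lt.1 hlt))
  · rw [Set.not_infinite] at hr
    have : Finite (Set.range m) := hr
    obtain ⟨⟨v, hv⟩, hvi⟩ := Finite.exists_infinite_fiber (Set.rangeFactorization m)
    have hvi' : {n | m n = v}.Infinite := by
      rw [← Set.infinite_coe_iff]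
      convert hvi using 2
      ext n
      simp [Set.rangeFactorization, Subtype.ext_iff]
    have hvK : v ∈ K := by
      simp only [K, Set.mem_iInter]
      intro i
      obtain ⟨n0, hn0⟩ := Filter.eventually_atTop.1 (hevm i)
      obtain ⟨n, hn, hlt⟩ := hvi'.exists_gt n0
      rw [← show m n = v from hn]
      exact hn0 n hlt.le
    obtain ⟨n, rfl⟩ := hv
    exact hmK n hvK

/-- `𝔭` is the least cardinal `κ` such that `2^κ` is not CDH: `2^κ` is CDH for all
`κ < 𝔭`, and `2^𝔭` is not CDH. -/
theorem p_eq_min_not_CDH :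
    pseudoIntersectionNumber =
      sInf {c : Cardinal | ∃ I : Type, Cardinal.mk I = c ∧ ¬ IsCDH (I → Bool)} ∧
    (∀ I : Type, Cardinal.mk I < pseudoIntersectionNumber → IsCDH (I → Bool)) ∧
    (∀ I : Type, Cardinal.mk I = pseudoIntersectionNumber → ¬ IsCDH (I → Bool)) := by
  have h1 : ∀ I : Type, Cardinal.mk I < pseudoIntersectionNumber → IsCDH (I → Bool) := by
    intro I hI
    rcases finite_or_infinite I with h | h
    · exact cdh_finite
    · exact cdh_lt hI
  have h2 : ∀ I : Type, Cardinal.mk I = pseudoIntersectionNumber → ¬ IsCDH (I → Bool) :=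
    fun I hI => cdh_not hI
  refine ⟨le_antisymm ?_ ?_, h1, h2⟩
  · refine le_csInf ⟨_, pseudoIntersectionNumber.out, Cardinal.mk_out _,
      h2 _ (Cardinal.mk_out _)⟩ ?_
    rintro _ ⟨I, rfl, hI⟩
    by_contra hlt
    exact hI (h1 I (not_le.1 hlt))
  · exact csInf_le' ⟨pseudoIntersectionNumber.out, Cardinal.mk_out _, h2 _ (Cardinal.mk_out _)⟩
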